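/- Let R be a (possibly noncommutative) domain. For any Laurent series f, g over R with g ≠ 0, either there exists u ∈ LaurentSeries R with f = g·u, or there exist u, v ∈ LaurentSeries R with f = g·u + v and v ≠ 0 such that ψ(g) does not right-divide ψ(v) in R (i.e. there is no q ∈ R with ψ(v) = ψ(g)·q). -/

import Mathlib

/-- For a nonzero Laurent series `f`, `psi f` is the coefficient of its lowest-degree term
(its leading coefficient); `psi 0 = 0`. -/
noncomputable def psi {R : Type*} [Ring R] (f : LaurentSeries R) : R := f.coeff f.order

/-- `φ` is a norm on `R`: `φ a = 0 ↔ a = 0` and `φ (a * b) ≥ φ a`. -/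
def IsNorm {R : Type*} [Ring R] (φ : R → ℕ) : Prop :=
  (∀ a : R, φ a = 0 ↔ a = 0) ∧ (∀ a b : R, φ a ≤ φ (a * b))

/-- `R` is right ω-Euclidean with respect to `φ`: for all `a b` with `b ≠ 0` there is a
right `k`-stage division chain `a = b q₁ + r₁, b = r₁ q₂ + r₂, …, r_{k-2} = r_{k-1} q_k + r_k`
with `φ r_k < φ b`.  Here `s 0 = a`, `s 1 = b` and `s (i+2) = r_{i+1}`. -/
def IsRightOmegaEuclidean {R : Type*} [Ring R] (φ : R → ℕ) : Prop :=
  ∀ a b : R, b ≠ 0 → ∃ (k : ℕ) (s q : ℕ → R), 1 ≤ k ∧ s 0 = a ∧ s 1 = b ∧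
    (∀ i < k, s i = s (i + 1) * q (i + 1) + s (i + 2)) ∧ φ (s (k + 1)) < φ b

theorem aux_mul_vanish {R : Type*} [Ring R] (g h : LaurentSeries R) (a b : ℤ)
    (hg : ∀ k < a, g.coeff k = 0) (hh : ∀ k < b, h.coeff k = 0) (k : ℤ) (hk : k < a + b) :
    (g * h).coeff k = 0 := by
  rw [HahnSeries.coeff_mul]
  apply Finset.sum_eq_zero
  rintro ⟨i, j⟩ hij
  rw [Finset.mem_antidiagonal] at hij
  obtain ⟨_, _, h3⟩ := hij
  simp only at h3 ⊢
  by_cases hi : i < a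
  · rw [hg i hi, zero_mul]
  · rw [hh j (by omega), mul_zero]

/-- Proposition 1 (σ = 1 case): for Laurent series `f, g` with `g ≠ 0`, either `f = g u`,
or `f = g u + v` with `v ≠ 0` and `ψ g` does not right-divide `ψ v`. -/
theorem laurentSeries_division {R : Type*} [Ring R] [IsDomain R]
    (f g : LaurentSeries R) (hg : g ≠ 0) :
    (∃ u : LaurentSeries R, f = g * u) ∨
    (∃ u v : LaurentSeries R, f = g * u + v ∧ v ≠ 0 ∧ ¬ ∃ q : R, psi v = psi g * q) := by
  by_contra hcon
  push Not at hcon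
  obtain ⟨h1, h2⟩ := hcon
  have hlow : ∀ k < g.order, g.coeff k = 0 := fun k hk => HahnSeries.coeff_eq_zero_of_lt_order hk
  have H : ∀ (u : LaurentSeries R) (m : ℤ), ∃ q : R, (∀ k < m, (f - g * u).coeff k = 0) →
      (f - g * u).coeff m = psi g * q := by
    intro u m
    by_cases hv : ∀ k < m, (f - g * u).coeff k = 0
    · by_cases h0 : (f - g * u).coeff m = 0
      · exact ⟨0, fun _ => by rw [h0, mul_zero]⟩
      · have hne : f - g * u ≠ 0 := fun h => h0 (by rw [h]; rfl)
        obtain ⟨q, hq⟩ := h2 u (f - g * u) (by abel) hne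
        have ho : (f - g * u).order = m := by
          apply le_antisymm (HahnSeries.order_le_of_coeff_ne_zero h0)
          by_contra hlt
          exact HahnSeries.coeff_order_eq_zero.not.mpr hne (hv _ (not_le.mp hlt))
        refine ⟨q, fun _ => ?_⟩
        rw [← hq, psi, ho]
    · exact ⟨0, fun h => absurd h hv⟩
  choose q hq using H
  let U : ℕ → LaurentSeries R := fun n => Nat.rec 0
    (fun n u => u + HahnSeries.single (f.order + n - g.order) (q u (f.order + n))) n
  have U0 : U 0 = 0 := rfl
  have US : ∀ n : ℕ, U (n + 1) = U n +
    HahnSeries.single (f.order + n - g.order) (q (U n) (f.order + n)) := fun n => rfl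
  clear_value U
  have hU : ∀ n : ℕ, ∀ k < f.order + n, (f - g * U n).coeff k = 0 := by
    intro n
    induction n with
    | zero =>
      intro k hk
      rw [U0, mul_zero, sub_zero]
      exact HahnSeries.coeff_eq_zero_of_lt_order (by simpa using hk)
    | succ n ih =>
      intro k hk
      push_cast at hk
      rw [US, mul_add, ← sub_sub, HahnSeries.coeff_sub]
      rcases lt_or_eq_of_le (show k ≤ f.order + n by omega) with hlt | rfl
      · rw [ih k hlt, zero_sub, neg_eq_zero]
        refine aux_mul_vanish g _ g.order (f.order + n - g.order) hlow ?_ k (by omega)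
        intro j hj
        exact HahnSeries.coeff_single_of_ne hj.ne
      · rw [hq (U n) _ ih]
        have := HahnSeries.coeff_mul_single_add (r := q (U n) (f.order + n)) (x := g)
          (a := g.order) (b := f.order + n - g.order)
        rw [show g.order + (f.order + n - g.order) = f.order + n by ring] at this
        rw [this, psi, sub_self]
  have hst : ∀ n : ℕ, ∀ k < f.order - g.order, (U n).coeff k = 0 := by
    intro n
    induction n with
    | zero => intro k _; rw [U0]; rfl
    | succ n ih =>
      intro k hk
      rw [US, HahnSeries.coeff_add, ih k hk, HahnSeries.coeff_single_of_ne (by omega), add_zero]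
  have hst2 : ∀ (n d : ℕ), ∀ k < f.order + n - g.order, (U (n + d)).coeff k = (U n).coeff k := by
    intro n d
    induction d with
    | zero => intro k _; rfl
    | succ d ih =>
      intro k hk
      rw [← add_assoc, US, HahnSeries.coeff_add, ih k hk,
        HahnSeries.coeff_single_of_ne (by push_cast; omega), add_zero]
  let w : LaurentSeries R := HahnSeries.ofSuppBddBelow
    (fun k => (U (k - (f.order - g.order) + 1).toNat).coeff k) (by
      refine ⟨f.order - g.order, fun k hk => ?_⟩
      by_contra hlt
      exact hk (hst _ k (not_le.mp hlt)))
  have hw : ∀ k, w.coeff k = (U (k - (f.order - g.order) + 1).toNat).coeff k := fun k => rfl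
  apply h1 w
  rw [← sub_eq_zero]
  ext k
  obtain ⟨n, hn⟩ : ∃ n : ℕ, k < f.order + n := ⟨(k - f.order + 1).toNat, by omega⟩
  have e : f - g * w = (f - g * U n) - g * (w - U n) := by rw [mul_sub]; abel
  rw [e, HahnSeries.coeff_sub, hU n k hn, zero_sub, HahnSeries.coeff_zero, neg_eq_zero]
  refine aux_mul_vanish g _ g.order (f.order + n - g.order) hlow ?_ k (by omega)
  intro j hj
  rw [HahnSeries.coeff_sub, hw, sub_eq_zero]
  by_cases hj0 : j < f.order - g.order
  · rw [hst _ j hj0, hst _ j hj0]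
  · obtain ⟨d, hd⟩ := Nat.exists_eq_add_of_le
      (show (j - (f.order - g.order) + 1).toNat ≤ n by omega)
    have := hst2 (j - (f.order - g.order) + 1).toNat d j (by omega)
    rw [← hd] at this
    exact this.symm
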